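/- Let d ≥ 1 and let 𝔻 be a finitely generated multiplicative set in ℝ[x₁,…,x_d] such that 1 + x_j² ∈ 𝔻 for every j = 1,…,d−1, and let A := 𝔻⁻¹ℝ[x₁,…,x_d]. Then every linear functional L on A with L(a²) ≥ 0 for all a ∈ A admits a positive Borel measure μ on ℝ^d such that μ(Z(q)) = 0 for every q ∈ 𝔻 and, for all p ∈ ℝ[x₁,…,x_d] and q ∈ 𝔻, the function x ↦ p(x)/q(x) is μ-integrable and L(p/q) = ∫_{ℝ^d} p(x)/q(x) dμ(x). -/

import Mathlib

/-!
If `L f < 0` for some `f`, then the functionals nonnegative on squares form a cone containing `L`,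
and since `A` has countable dimension, a weighted gauge cuts out of this cone a cap in the sense of
Choquet: a compact convex set containing `L` whose extreme points span extreme rays of the cone.
By Krein–Milman some extreme `M` has `M f < 0`. If `w` and `1 - w` are sums of squares, then `M`
is the sum of `M (w * ·)` and `M ((1 - w) * ·)`, so multiplication by `w` acts on `M` as a scalar.
Applied to `w = (1 + x_j²)⁻¹` and `w = 1/2 + x_j (1 + x_j²)⁻¹` this shows that `x_j` itself acts as
a scalar for every coordinate but the last. Thus `M` lives on a line, where nonnegative polynomials
are sums of squares, so that `M f < 0` is impossible if `f` is nonnegative. Hence `L` is nonnegative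
on every fraction which is nonnegative where the denominators do not vanish.

Haviland's argument now applies on that open set: the Riesz extension theorem extends `L` to
compactly supported functions, where the Riesz–Markov–Kakutani theorem gives a measure. No mass
escapes, since `∑ x_i² + Q⁻²`, with `Q` the product of the generators of `𝔻`, is a fraction
that tends to infinity at the ends of the set.
-/

section SumsOfSquares

open Polynomial

theorem sq_X_sub_C_dvd_sub_C_eval_of_isLocalMin {p : ℝ[X]} {t : ℝ}
    (ht : IsLocalMin (fun x => p.eval x) t) : (X - C t) ^ 2 ∣ p - C (p.eval t) := by
  rcases eq_or_ne (p - C (p.eval t)) 0 with h0 | h0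
  · exact h0 ▸ dvd_zero _
  have hderiv : p.derivative.eval t = 0 := by
    simpa only [Polynomial.deriv] using ht.deriv_eq_zero
  rw [← le_rootMultiplicity_iff h0]
  exact (one_lt_rootMultiplicity_iff_isRoot h0).2 ⟨by simp, by simpa using hderiv⟩

theorem eval_nonneg_of_sq_X_sub_C_mul_eval_nonneg {q : ℝ[X]} {t : ℝ}
    (h : ∀ x, 0 ≤ ((X - C t) ^ 2 * q).eval x) (x : ℝ) : 0 ≤ q.eval x := by
  have hoff : ∀ y ∈ ({t}ᶜ : Set ℝ), 0 ≤ q.eval y := fun y hy => by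
    have hpos : 0 < (y - t) ^ 2 := by have := sub_ne_zero.2 hy; positivity
    exact nonneg_of_mul_nonneg_right (by simpa using h y) hpos
  have hclosed : IsClosed {y | 0 ≤ q.eval y} := isClosed_le continuous_const q.continuous
  exact hclosed.closure_subset_iff.2 hoff (dense_compl_singleton t x)

theorem exists_forall_eval_le_of_eval_nonneg {p : ℝ[X]} (hp : ∀ x, 0 ≤ p.eval x) :
    ∃ t, ∀ x, p.eval t ≤ p.eval x := by
  by_cases hdeg : 0 < p.degree
  · have hlim : Filter.Tendsto (fun x => |p.eval x|) (Filter.cocompact ℝ) Filter.atTop := by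
      rw [cocompact_eq_atBot_atTop]
      exact (p.abs_tendsto_atBot hdeg).sup (p.abs_tendsto_atTop hdeg)
    simp only [abs_of_nonneg (hp _)] at hlim
    exact p.continuous.exists_forall_le hlim
  · rw [eq_C_of_degree_le_zero (not_lt.1 hdeg)]
    exact ⟨0, by simp⟩

theorem isSumSq_algebraMap_of_nonneg (A : Type*) [CommRing A] [Algebra ℝ A] {c : ℝ} (hc : 0 ≤ c) :
    IsSumSq (algebraMap ℝ A c) := by
  rw [← Real.mul_self_sqrt hc, map_mul]
  exact .mul_self _

theorem isSumSq_of_forall_eval_nonneg {p : ℝ[X]} (hp : ∀ x, 0 ≤ p.eval x) : IsSumSq p := by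
  induction hn : p.natDegree using Nat.strong_induction_on generalizing p with
  | _ n ih =>
  obtain ⟨t, ht⟩ := exists_forall_eval_le_of_eval_nonneg hp
  obtain ⟨q, hq⟩ := sq_X_sub_C_dvd_sub_C_eval_of_isLocalMin (.of_forall ht)
  have hpq : p = (X - C t) * (X - C t) * q + C (p.eval t) := by rw [← sq, ← hq, sub_add_cancel]
  have hmin : IsSumSq (C (p.eval t)) := isSumSq_algebraMap_of_nonneg ℝ[X] (hp t)
  rcases eq_or_ne q 0 with rfl | hq0
  · rwa [hpq, mul_zero, zero_add]
  have hdeg : p.natDegree = 2 + q.natDegree := by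
    rw [← natDegree_sub_C, hq,
      natDegree_mul (pow_ne_zero 2 (X_sub_C_ne_zero t)) hq0, natDegree_pow, natDegree_X_sub_C]
  have hq_nonneg : ∀ x, 0 ≤ q.eval x :=
    eval_nonneg_of_sq_X_sub_C_mul_eval_nonneg (t := t) fun x => by
      rw [← hq, eval_sub, eval_C]
      exact sub_nonneg.2 (ht x)
  rw [hpq]
  exact ((IsSumSq.mul_self _).mul (ih q.natDegree (by lia) hq_nonneg rfl)).add hmin

theorem isSumSq_of_one_add_sq_mul_eq_one {A : Type*} [CommRing A] {x u : A}
    (hu : (1 + x ^ 2) * u = 1) : IsSumSq u := by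
  have hsq : u = u * u + x * u * (x * u) := by linear_combination (-u) * hu
  rw [hsq]
  exact (IsSumSq.mul_self _).add (.mul_self _)

theorem isSumSq_half_add_mul {A : Type*} [CommRing A] [Algebra ℝ A] {x u : A}
    (hu : (1 + x ^ 2) * u = 1) : IsSumSq (algebraMap ℝ A (1 / 2) + x * u) := by
  have htwo : 2 * algebraMap ℝ A (1 / 2) = 1 := by
    rw [← map_ofNat (algebraMap ℝ A) 2, ← map_mul]
    norm_num
  have hsq : algebraMap ℝ A (1 / 2) + x * u
      = algebraMap ℝ A (1 / 2) * ((1 + x) * (1 + x) * u) := by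
    linear_combination -algebraMap ℝ A (1 / 2) * hu - x * u * htwo
  rw [hsq]
  exact (isSumSq_algebraMap_of_nonneg A (by norm_num)).mul
    ((IsSumSq.mul_self _).mul (isSumSq_of_one_add_sq_mul_eq_one hu))

end SumsOfSquares

section Caps

open scoped ENNReal NNReal

variable {E : Type*} [AddCommGroup E] [Module ℝ E]

/-- `x` spans an extreme ray of the cone `C`: the only ways to write `x` as a sum of two elements
of `C` are the trivial ones. The zero vector is allowed. -/
def SpansExtremeRay (C : PointedCone ℝ E) (x : E) : Prop :=
  x ∈ C ∧ ∀ y ∈ C, ∀ z ∈ C, y + z = x → ∃ θ : ℝ, y = θ • x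

/-- A positive additive gauge on the cone `C`, with value `∞` allowed. Its unit ball is
`gaugeCap C N`, a cap of `C` in the sense of Choquet. -/
structure IsConeGauge (C : PointedCone ℝ E) (N : E → ℝ≥0∞) : Prop where
  map_add : ∀ x ∈ C, ∀ y ∈ C, N (x + y) = N x + N y
  map_smul : ∀ (c : ℝ≥0) (x : E), N (c • x) = c * N x
  eq_zero : ∀ x ∈ C, N x = 0 → x = 0

/-- The part of the cone `C` on which the gauge `N` is at most one. -/
def gaugeCap (C : PointedCone ℝ E) (N : E → ℝ≥0∞) : Set E :=
  {x | x ∈ C ∧ N x ≤ 1}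

theorem spansExtremeRay_of_mem_extremePoints {C : PointedCone ℝ E} {N : E → ℝ≥0∞}
    (hN : IsConeGauge C N) {x : E} (hx : x ∈ (gaugeCap C N).extremePoints ℝ) :
    SpansExtremeRay C x := by
  refine ⟨hx.1.1, fun y hy z hz hyz => ?_⟩
  have hsum : N y + N z ≤ 1 := by
    rw [← hN.map_add y hy z hz, hyz]
    exact hx.1.2
  obtain ⟨hα_top, hβ_top⟩ := ENNReal.add_ne_top.1 (hsum.trans_lt ENNReal.one_lt_top).ne
  lift N y to ℝ≥0 using hα_top with α hα
  lift N z to ℝ≥0 using hβ_top with β hβ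
  rcases eq_or_ne α 0 with rfl | hα0
  · exact ⟨0, by rw [hN.eq_zero y hy (by simp [← hα]), zero_smul]⟩
  rcases eq_or_ne β 0 with rfl | hβ0
  · exact ⟨1, by rw [← hyz, hN.eq_zero z hz (by simp [← hβ]), add_zero, one_smul]⟩
  have hγ0 : α + β ≠ 0 := by positivity
  have hrescale : ∀ v ∈ C, ∀ r : ℝ≥0, N v = r → r ≠ 0 → ((α + β) / r) • v ∈ gaugeCap C N :=
    fun v hv r hr hr0 => ⟨C.smul_mem ((α + β) / r).2 hv, by
      rw [hN.map_smul, hr, ← ENNReal.coe_mul, div_mul_cancel₀ _ hr0, ENNReal.coe_add]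
      exact hsum⟩
  have hcombo : x ∈ openSegment ℝ (((α + β) / α) • y) (((α + β) / β) • z) := by
    refine ⟨(α / (α + β) : ℝ≥0), (β / (α + β) : ℝ≥0), by positivity, by positivity, ?_, ?_⟩
    · rw [← NNReal.coe_add, ← add_div, div_self hγ0, NNReal.coe_one]
    · rw [← hyz, ← NNReal.smul_def, ← NNReal.smul_def, smul_smul, smul_smul,
        div_mul_div_cancel₀ hγ0, div_mul_div_cancel₀ hγ0, div_self hα0, div_self hβ0, one_smul,
        one_smul]
  have heq := hx.2 (hrescale y hy α hα.symm hα0) (hrescale z hz β hβ.symm hβ0) hcombo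
  refine ⟨(α / (α + β) : ℝ≥0), ?_⟩
  rw [← heq, ← NNReal.smul_def, smul_smul, div_mul_div_cancel₀ hγ0, div_self hα0, one_smul]

theorem exists_spansExtremeRay_of_isCompact_gaugeCap [TopologicalSpace E] [T2Space E]
    [IsTopologicalAddGroup E] [ContinuousSMul ℝ E] [LocallyConvexSpace ℝ E]
    {C : PointedCone ℝ E} {N : E → ℝ≥0∞} (hN : IsConeGauge C N) (hcap : IsCompact (gaugeCap C N))
    {x₀ : E} (hx₀ : x₀ ∈ gaugeCap C N) (l : StrongDual ℝ E) :
    ∃ x, SpansExtremeRay C x ∧ l x₀ ≤ l x := by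
  have hface : IsExposed ℝ (gaugeCap C N) (l.toExposed (gaugeCap C N)) :=
    ContinuousLinearMap.toExposed.isExposed
  obtain ⟨m, hm, hmax⟩ := hcap.exists_isMaxOn ⟨x₀, hx₀⟩ l.continuous.continuousOn
  obtain ⟨x, hx⟩ := (hface.isCompact hcap).extremePoints_nonempty ⟨m, hm, hmax⟩
  exact ⟨x, spansExtremeRay_of_mem_extremePoints hN
    (hface.isExtreme.extremePoints_subset_extremePoints hx), hx.1.2 x₀ hx₀⟩

end Caps

section SquarePositive

open Set

/-- The cone of linear functionals on `A` that are nonnegative on squares. -/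
def squarePositiveCone (A : Type*) [CommRing A] [Algebra ℝ A] : PointedCone ℝ (Module.Dual ℝ A) :=
  PointedCone.dual (Module.Dual.eval ℝ A) (range fun b : A => b ^ 2)

variable {A : Type*} [CommRing A] [Algebra ℝ A] {M : Module.Dual ℝ A}

theorem mem_squarePositiveCone : M ∈ squarePositiveCone A ↔ ∀ b, 0 ≤ M (b ^ 2) :=
  forall_mem_range

theorem nonneg_of_isSumSq (hM : M ∈ squarePositiveCone A) {b : A} (hb : IsSumSq b) : 0 ≤ M b := by
  induction hb with
  | zero => rw [map_zero]
  | sq_add a _ ih =>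
    rw [map_add, ← sq]
    exact add_nonneg (mem_squarePositiveCone.1 hM a) ih

theorem apply_one_add_sq_nonneg (hM : M ∈ squarePositiveCone A) (b : A) : 0 ≤ M (1 + b ^ 2) := by
  rw [map_add, ← one_pow 2]
  exact add_nonneg (mem_squarePositiveCone.1 hM 1) (mem_squarePositiveCone.1 hM b)

theorem two_mul_abs_apply_le (hM : M ∈ squarePositiveCone A) (b : A) :
    2 * |M b| ≤ M (1 + b ^ 2) := by
  have hplus := mem_squarePositiveCone.1 hM (1 + b)
  have hminus := mem_squarePositiveCone.1 hM (1 - b)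
  have hadd : (1 + b) ^ 2 = 1 + b ^ 2 + (2 : ℝ) • b := by rw [two_smul]; ring
  have hsub : (1 - b) ^ 2 = 1 + b ^ 2 - (2 : ℝ) • b := by rw [two_smul]; ring
  rw [hadd, map_add, map_smul, smul_eq_mul] at hplus
  rw [hsub, map_sub, map_smul, smul_eq_mul] at hminus
  rcases abs_cases (M b) with ⟨h, _⟩ | ⟨h, _⟩ <;> rw [h] <;> linarith

theorem comp_mulLeft_mem_squarePositiveCone (hM : M ∈ squarePositiveCone A) {w : A}
    (hw : IsSumSq w) : M ∘ₗ LinearMap.mulLeft ℝ w ∈ squarePositiveCone A :=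
  mem_squarePositiveCone.2 fun b => nonneg_of_isSumSq hM (hw.mul (sq b ▸ .mul_self b))

end SquarePositive

section SquareGauge

open scoped ENNReal NNReal
open Set

variable {A : Type*} [CommRing A] [Algebra ℝ A] {ι : Type*}

/-- The weighted gauge `M ↦ ∑ i, δ i * M (1 + a i ^ 2)` on the functionals that are nonnegative on
squares. -/
noncomputable def squareGauge (a : ι → A) (δ : ι → ℝ≥0) (M : Module.Dual ℝ A) : ℝ≥0∞ :=
  ∑' i, δ i * ENNReal.ofReal (M (1 + a i ^ 2))

variable {a : ι → A} {δ : ι → ℝ≥0}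

theorem isConeGauge_squareGauge (hspan : Submodule.span ℝ (range a) = ⊤) (hδ : ∀ i, 0 < δ i) :
    IsConeGauge (squarePositiveCone A) (squareGauge a δ) where
  map_add M hM M' hM' := by
    rw [squareGauge, squareGauge, squareGauge, ← ENNReal.tsum_add]
    refine tsum_congr fun i => ?_
    rw [LinearMap.add_apply, ENNReal.ofReal_add (apply_one_add_sq_nonneg hM _)
      (apply_one_add_sq_nonneg hM' _), mul_add]
  map_smul c M := by
    rw [squareGauge, squareGauge, ← ENNReal.tsum_mul_left]
    refine tsum_congr fun i => ?_
    rw [LinearMap.smul_apply, NNReal.smul_def, smul_eq_mul, ENNReal.ofReal_mul c.coe_nonneg,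
      ENNReal.ofReal_coe_nnreal, mul_left_comm]
  eq_zero M hM h0 := by
    refine LinearMap.ext_on_range hspan fun i => ?_
    have hterm := (mul_eq_zero.1 (ENNReal.tsum_eq_zero.1 h0 i)).resolve_left
      (ENNReal.coe_ne_zero.2 (hδ i).ne')
    have habs := two_mul_abs_apply_le hM (a i)
    rw [LinearMap.zero_apply, ← abs_nonpos_iff]
    linarith [ENNReal.ofReal_eq_zero.1 hterm]

theorem exists_mem_gaugeCap_squareGauge [Countable ι] (a : ι → A) {L : Module.Dual ℝ A}
    (hL : L ∈ squarePositiveCone A) :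
    ∃ δ : ι → ℝ≥0, (∀ i, 0 < δ i) ∧ L ∈ gaugeCap (squarePositiveCone A) (squareGauge a δ) := by
  obtain ⟨δ, hδ, hsum⟩ := ENNReal.exists_pos_tsum_mul_lt_of_countable one_ne_zero
    (fun i => ENNReal.ofReal (L (1 + a i ^ 2))) fun _ => ENNReal.ofReal_ne_top
  refine ⟨δ, hδ, hL, le_of_eq_of_le ?_ hsum.le⟩
  exact tsum_congr fun i => mul_comm _ _

theorem abs_apply_le_inv_of_mem_gaugeCap (hδ : ∀ i, 0 < δ i) {M : Module.Dual ℝ A}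
    (hM : M ∈ gaugeCap (squarePositiveCone A) (squareGauge a δ)) (i : ι) :
    |M (a i)| ≤ (δ i : ℝ)⁻¹ := by
  have hterm : (δ i : ℝ≥0∞) * ENNReal.ofReal (M (1 + a i ^ 2)) ≤ 1 :=
    (ENNReal.le_tsum i).trans hM.2
  rw [← ENNReal.ofReal_coe_nnreal, ← ENNReal.ofReal_mul (δ i).coe_nonneg,
    ENNReal.ofReal_le_one] at hterm
  have hle : M (1 + a i ^ 2) ≤ (δ i : ℝ)⁻¹ := by
    rwa [← one_div, le_div_iff₀' (NNReal.coe_pos.2 (hδ i))]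
  linarith [two_mul_abs_apply_le hM.1 (a i), abs_nonneg (M (a i))]

end SquareGauge

section PointwiseTopology

open Set

variable {V : Type*} [AddCommGroup V] [Module ℝ V]

/-- The topology of pointwise convergence on the algebraic dual. -/
abbrev pointwiseTopology (V : Type*) [AddCommGroup V] [Module ℝ V] :
    TopologicalSpace (Module.Dual ℝ V) :=
  .induced (fun M v => M v) Pi.topologicalSpace

attribute [local instance] pointwiseTopology

theorem isClosedEmbedding_coe_dual :
    Topology.IsClosedEmbedding (fun (M : Module.Dual ℝ V) v => M v) :=
  ⟨⟨⟨rfl⟩, DFunLike.coe_injective⟩, LinearMap.isClosed_range_coe V ℝ (RingHom.id ℝ)⟩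

theorem continuous_dual_apply (v : V) : Continuous fun M : Module.Dual ℝ V => M v :=
  (continuous_apply v).comp isClosedEmbedding_coe_dual.continuous

theorem isCompact_of_forall_abs_apply_le {ι : Type*} {a : ι → V}
    (hspan : Submodule.span ℝ (range a) = ⊤) {S : Set (Module.Dual ℝ V)} (hS : IsClosed S)
    (hbound : ∀ i, ∃ c, ∀ M ∈ S, |M (a i)| ≤ c) : IsCompact S := by
  have hall : ∀ v, ∃ c, ∀ M ∈ S, |M v| ≤ c := fun v => by
    induction (hspan ▸ Submodule.mem_top : v ∈ Submodule.span ℝ (range a))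
      using Submodule.span_induction with
    | mem v hv =>
      obtain ⟨i, rfl⟩ := hv
      exact hbound i
    | zero => exact ⟨0, fun M _ => by simp⟩
    | add v w _ _ hv hw =>
      obtain ⟨c, hc⟩ := hv
      obtain ⟨c', hc'⟩ := hw
      exact ⟨c + c', fun M hM => by
        rw [map_add]
        exact (abs_add_le _ _).trans (add_le_add (hc M hM) (hc' M hM))⟩
    | smul r v _ hv =>
      obtain ⟨c, hc⟩ := hv
      exact ⟨|r| * c, fun M hM => by
        rw [map_smul, smul_eq_mul, abs_mul]
        exact mul_le_mul_of_nonneg_left (hc M hM) (abs_nonneg r)⟩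
  choose c hc using hall
  have hbox : IsCompact (univ.pi fun v => Icc (-c v) (c v)) :=
    isCompact_univ_pi fun v => isCompact_Icc
  exact (isClosedEmbedding_coe_dual.isCompact_preimage hbox).of_isClosed_subset hS
    fun M hM v _ => abs_le.1 (hc v M hM)

end PointwiseTopology

section ExtremeSeparation

open scoped ENNReal NNReal
open Set

attribute [local instance] pointwiseTopology

variable {A : Type*} [CommRing A] [Algebra ℝ A] {ι : Type*} {a : ι → A} {δ : ι → ℝ≥0}

theorem isCompact_gaugeCap_squareGauge (hspan : Submodule.span ℝ (range a) = ⊤)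
    (hδ : ∀ i, 0 < δ i) : IsCompact (gaugeCap (squarePositiveCone A) (squareGauge a δ)) := by
  refine isCompact_of_forall_abs_apply_le hspan ?_
    fun i => ⟨_, fun M hM => abs_apply_le_inv_of_mem_gaugeCap hδ hM i⟩
  have hcone : IsClosed {M | M ∈ squarePositiveCone A} := by
    simp only [mem_squarePositiveCone, ofPred_forall]
    exact isClosed_iInter fun b => isClosed_le continuous_const (continuous_dual_apply _)
  have hgauge : LowerSemicontinuous (squareGauge a δ) := lowerSemicontinuous_tsum fun i =>
    ((ENNReal.continuous_const_mul ENNReal.coe_ne_top).comp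
      (ENNReal.continuous_ofReal.comp (continuous_dual_apply _))).lowerSemicontinuous
  exact hcone.inter (hgauge.isClosed_preimage 1)

theorem exists_spansExtremeRay_squarePositiveCone_apply_neg [Countable ι]
    (hspan : Submodule.span ℝ (range a) = ⊤) {L : Module.Dual ℝ A}
    (hL : L ∈ squarePositiveCone A) {f : A} (hf : L f < 0) :
    ∃ M, SpansExtremeRay (squarePositiveCone A) M ∧ M f < 0 := by
  let e : Module.Dual ℝ A →ₗ[ℝ] A → ℝ := LinearMap.pi (Module.Dual.eval ℝ A)
  have : T2Space (Module.Dual ℝ A) := isClosedEmbedding_coe_dual.isEmbedding.t2Space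
  have : IsTopologicalAddGroup (Module.Dual ℝ A) := topologicalAddGroup_induced e
  have : ContinuousSMul ℝ (Module.Dual ℝ A) := continuousSMul_induced e
  have : LocallyConvexSpace ℝ (Module.Dual ℝ A) := LocallyConvexSpace.induced e
  obtain ⟨δ, hδ, hLcap⟩ := exists_mem_gaugeCap_squareGauge a hL
  obtain ⟨M, hM, hle⟩ := exists_spansExtremeRay_of_isCompact_gaugeCap
    (isConeGauge_squareGauge hspan hδ) (isCompact_gaugeCap_squareGauge hspan hδ) hLcap
    (-⟨Module.Dual.eval ℝ A f, continuous_dual_apply f⟩)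
  exact ⟨M, hM, (neg_le_neg_iff.1 hle).trans_lt hf⟩

end ExtremeSeparation

section ExtremeFunctionals

variable {A : Type*} [CommRing A] [Algebra ℝ A] {M : Module.Dual ℝ A}

/-- The largest ideal contained in the kernel of the functional `M`. -/
def idealKer (M : Module.Dual ℝ A) : Ideal A where
  carrier := {a | ∀ b, M (a * b) = 0}
  add_mem' ha hb c := by rw [add_mul, map_add, ha, hb, add_zero]
  zero_mem' b := by rw [zero_mul, map_zero]
  smul_mem' c a ha b := by rw [smul_eq_mul, mul_comm c, mul_assoc, ha]

theorem apply_eq_of_mk_idealKer_eq {a b : A}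
    (h : Ideal.Quotient.mk (idealKer M) a = Ideal.Quotient.mk (idealKer M) b) : M a = M b := by
  have hmem : M ((a - b) * 1) = 0 := Ideal.Quotient.eq.1 h 1
  rwa [mul_one, map_sub, sub_eq_zero] at hmem

theorem exists_sub_algebraMap_mem_idealKer_of_isSumSq
    (hM : SpansExtremeRay (squarePositiveCone A) M) {w : A} (hw : IsSumSq w)
    (hw' : IsSumSq (1 - w)) : ∃ θ : ℝ, w - algebraMap ℝ A θ ∈ idealKer M := by
  obtain ⟨θ, hθ⟩ := hM.2 _ (comp_mulLeft_mem_squarePositiveCone hM.1 hw)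
    _ (comp_mulLeft_mem_squarePositiveCone hM.1 hw') (by
      ext b
      rw [LinearMap.add_apply, LinearMap.comp_apply, LinearMap.comp_apply, ← map_add,
        LinearMap.mulLeft_apply, LinearMap.mulLeft_apply, ← add_mul, add_sub_cancel, one_mul])
  refine ⟨θ, fun b => ?_⟩
  have hb : M (w * b) = θ * M b := LinearMap.congr_fun hθ b
  rw [sub_mul, map_sub, hb, ← Algebra.smul_def, map_smul, smul_eq_mul, sub_self]

theorem exists_sub_algebraMap_mem_idealKer_of_isUnit_one_add_sq
    (hM : SpansExtremeRay (squarePositiveCone A) M) {x : A} (hx : IsUnit (1 + x ^ 2)) :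
    ∃ t : ℝ, x - algebraMap ℝ A t ∈ idealKer M := by
  obtain ⟨u, hu⟩ := hx.exists_right_inv
  have hneg : (1 + (-x) ^ 2) * u = 1 := by rwa [neg_sq]
  have hhalf : (1 : A) - algebraMap ℝ A (1 / 2) = algebraMap ℝ A (1 / 2) := by
    rw [← map_one (algebraMap ℝ A), ← map_sub]
    norm_num
  obtain ⟨α, hα⟩ := exists_sub_algebraMap_mem_idealKer_of_isSumSq hM
    (isSumSq_of_one_add_sq_mul_eq_one hu) (by
      rw [show 1 - u = x * x * u by linear_combination -hu]
      exact (IsSumSq.mul_self x).mul (isSumSq_of_one_add_sq_mul_eq_one hu))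
  obtain ⟨β, hβ⟩ := exists_sub_algebraMap_mem_idealKer_of_isSumSq hM
    (isSumSq_half_add_mul hu) (by
      rw [← sub_sub, hhalf, sub_eq_add_neg, ← neg_mul]
      exact isSumSq_half_add_mul hneg)
  rcases eq_or_ne α 0 with rfl | hα0
  · have htop : (1 : A) ∈ idealKer M := by
      rw [← hu]
      exact Ideal.mul_mem_left _ _ (by simpa using hα)
    exact ⟨0, (Ideal.eq_top_iff_one _).2 htop ▸ Submodule.mem_top⟩
  have hinv : algebraMap ℝ A α⁻¹ * algebraMap ℝ A α = 1 := by
    rw [← map_mul, inv_mul_cancel₀ hα0, map_one]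
  have hcombo : x - algebraMap ℝ A (α⁻¹ * (β - 1 / 2)) = algebraMap ℝ A α⁻¹ *
      (algebraMap ℝ A (1 / 2) + x * u - algebraMap ℝ A β - x * (u - algebraMap ℝ A α)) := by
    rw [map_mul, map_sub]
    linear_combination -x * hinv
  exact ⟨_, hcombo ▸ Ideal.mul_mem_left _ _ (sub_mem hβ (Ideal.mul_mem_left _ _ hα))⟩

end ExtremeFunctionals

section OneVariableReduction

open MvPolynomial

variable {A : Type*} [CommRing A] [Algebra ℝ A] {σ : Type*}

theorem eval_aeval_update_C [DecidableEq σ] (i₀ : σ) (t : σ → ℝ) (s : ℝ) (p : MvPolynomial σ ℝ) :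
    (aeval (Function.update (fun j => Polynomial.C (t j)) i₀ Polynomial.X) p).eval s =
      eval (Function.update t i₀ s) p := by
  have hcomp : (Polynomial.aeval s).comp
      (aeval (Function.update (fun j => Polynomial.C (t j)) i₀ Polynomial.X)) =
        aeval (Function.update t i₀ s) := by
    refine algHom_ext fun j => ?_
    rcases eq_or_ne j i₀ with rfl | hj
    · simp
    · simp [hj]
  exact DFunLike.congr_fun hcomp p

theorem SpansExtremeRay.apply_nonneg_of_isUnit_one_add_sq {M : Module.Dual ℝ A}
    (hM : SpansExtremeRay (squarePositiveCone A) M) {ψ : MvPolynomial σ ℝ →ₐ[ℝ] A} {i₀ : σ}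
    (hunit : ∀ j ≠ i₀, IsUnit (1 + ψ (X j) ^ 2)) {p : MvPolynomial σ ℝ}
    (hp : ∀ x, 0 ≤ eval x p) : 0 ≤ M (ψ p) := by
  classical
  choose! t ht using fun j hj => exists_sub_algebraMap_mem_idealKer_of_isUnit_one_add_sq hM
    (hunit j hj)
  let line : MvPolynomial σ ℝ →ₐ[ℝ] Polynomial ℝ :=
    aeval (Function.update (fun j => Polynomial.C (t j)) i₀ Polynomial.X)
  let lift : Polynomial ℝ →ₐ[ℝ] A := Polynomial.aeval (ψ (X i₀))
  have hmod : (Ideal.Quotient.mkₐ ℝ (idealKer M)).comp ψ =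
      (Ideal.Quotient.mkₐ ℝ (idealKer M)).comp (lift.comp line) := by
    refine algHom_ext fun j => ?_
    rcases eq_or_ne j i₀ with rfl | hj
    · simp [line, lift]
    · simpa [line, lift, hj, Polynomial.aeval_C] using Ideal.Quotient.eq.2 (ht j hj)
  have hsos : IsSumSq (line p) := isSumSq_of_forall_eval_nonneg fun s =>
    (eval_aeval_update_C i₀ t s p).symm ▸ hp _
  have hMp : M (ψ p) = M (lift (line p)) :=
    apply_eq_of_mk_idealKer_eq (DFunLike.congr_fun hmod p)
  have hlift : M ∘ₗ lift.toLinearMap ∈ squarePositiveCone (Polynomial ℝ) :=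
    mem_squarePositiveCone.2 fun b => by
      simpa using mem_squarePositiveCone.1 hM.1 (lift b)
  exact hMp ▸ nonneg_of_isSumSq hlift hsos

theorem apply_nonneg_of_isUnit_one_add_sq {ι : Type*} [Countable ι] {a : ι → A}
    (hspan : Submodule.span ℝ (Set.range a) = ⊤) {ψ : MvPolynomial σ ℝ →ₐ[ℝ] A} {i₀ : σ}
    (hunit : ∀ j ≠ i₀, IsUnit (1 + ψ (X j) ^ 2)) {L : Module.Dual ℝ A}
    (hL : L ∈ squarePositiveCone A) {p : MvPolynomial σ ℝ} (hp : ∀ x, 0 ≤ eval x p) :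
    0 ≤ L (ψ p) := by
  by_contra! hneg
  obtain ⟨M, hM, hMneg⟩ := exists_spansExtremeRay_squarePositiveCone_apply_neg hspan hL hneg
  exact hMneg.not_ge (hM.apply_nonneg_of_isUnit_one_add_sq hunit hp)

end OneVariableReduction

section PositiveExtension

theorem exists_linearMap_forall_add_nonneg {E F G : Type*} [AddCommGroup E] [Module ℝ E]
    [AddCommGroup F] [Module ℝ F] [AddCommGroup G] [PartialOrder G] [IsOrderedAddMonoid G]
    [Module ℝ G] [PosSMulMono ℝ G] (T : E →ₗ[ℝ] G) (S : F →ₗ[ℝ] G) (L : E →ₗ[ℝ] ℝ)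
    (hL : ∀ a, 0 ≤ T a → 0 ≤ L a) (hdom : ∀ f, ∃ a, 0 ≤ T a + S f) :
    ∃ Λ : F →ₗ[ℝ] ℝ, ∀ a f, 0 ≤ T a + S f → 0 ≤ L a + Λ f := by
  let cone : PointedCone ℝ (E × F) := (PointedCone.positive ℝ G).comap (T.coprod S)
  let L' : E × F →ₗ.[ℝ] ℝ :=
    ⟨LinearMap.range (LinearMap.inl ℝ E F), (L ∘ₗ LinearMap.fst ℝ E F) ∘ₗ Submodule.subtype _⟩
  obtain ⟨g, hgL, hg⟩ := riesz_extension cone L'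
    (by
      rintro ⟨_, a, rfl⟩ ha
      exact hL a (by simpa [cone] using ha))
    (fun ⟨b, f⟩ => by
      obtain ⟨a, ha⟩ := hdom f
      exact ⟨⟨_, a - b, rfl⟩, by simpa [cone] using ha⟩)
  refine ⟨g ∘ₗ LinearMap.inr ℝ E F, fun a f haf => ?_⟩
  have hsplit : g (a, f) = L a + g (0, f) := by
    have hga : g (a, 0) = L a := hgL ⟨_, a, rfl⟩
    rw [← hga, ← map_add, Prod.mk_add_mk, add_zero, zero_add]
  exact hsplit ▸ hg (a, f) (by simpa [cone] using haf)

end PositiveExtension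

section Representation

open CompactlySupported MeasureTheory Filter Topology Set

variable {X : Type*} [TopologicalSpace X]

theorem exists_compactlySupported_eqOn_one [T2Space X] [LocallyCompactSpace X] {K : Set X}
    (hK : IsCompact K) :
    ∃ χ : C_c(X, ℝ), EqOn χ 1 K ∧ ∀ x, χ x ∈ Icc (0 : ℝ) 1 := by
  obtain ⟨f, hf, -, hsupp, hf01⟩ :=
    exists_continuous_one_zero_of_isCompact hK isClosed_empty (disjoint_empty K)
  exact ⟨⟨f, hsupp⟩, hf, hf01⟩

theorem eqOn_smul_of_eqOn_one {χ : C_c(X, ℝ)} {K : Set X} (hχ : EqOn χ 1 K) (g : C(X, ℝ)) :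
    EqOn (g • χ) g K := fun x hx => by
  rw [CompactlySupportedContinuousMap.smulc_apply, hχ hx, Pi.one_apply, smul_eq_mul, mul_one]

variable [MeasurableSpace X] {A : Type*} [CommRing A] [Algebra ℝ A]
  {φ : A →ₐ[ℝ] C(X, ℝ)} {L : A →ₗ[ℝ] ℝ}

theorem exists_measure_integral_le_of_le [T2Space X] [LocallyCompactSpace X] [BorelSpace X]
    (hL : ∀ a, 0 ≤ ⇑(φ a) → 0 ≤ L a) :
    ∃ μ : Measure X, IsFiniteMeasureOnCompacts μ ∧
      ∀ a (f : C_c(X, ℝ)), ⇑f ≤ φ a → ∫ x, f x ∂μ ≤ L a := by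
  let S : C_c(X, ℝ) →ₗ[ℝ] X → ℝ := ⟨⟨(⇑), fun _ _ => rfl⟩, fun _ _ => rfl⟩
  obtain ⟨Λ, hΛ⟩ := exists_linearMap_forall_add_nonneg
    (ContinuousMap.coeFnLinearMap ℝ ∘ₗ φ.toLinearMap) S L hL fun f => by
      obtain ⟨c, hc⟩ := f.hasCompactSupport.exists_bound_of_continuous f.continuous
      refine ⟨algebraMap ℝ A c, fun x => ?_⟩
      simpa [S] using neg_le_iff_add_nonneg.1 ((neg_le_abs _).trans (hc x))
  have hpos : ∀ f : C_c(X, ℝ), 0 ≤ f → 0 ≤ Λ f := fun f hf => by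
    have hadd := hΛ 0 f (by rwa [map_zero, zero_add])
    rwa [map_zero, zero_add] at hadd
  refine ⟨RealRMK.rieszMeasure (.mk₀ Λ hpos), inferInstance, fun a f hfa => ?_⟩
  have hsub := hΛ a (-f) (by
    rw [map_neg, ← sub_eq_add_neg]
    exact sub_nonneg.2 hfa)
  rw [RealRMK.integral_rieszMeasure]
  rwa [map_neg, ← sub_eq_add_neg, sub_nonneg] at hsub

variable {μ : Measure X}

theorem integral_smul_le_of_nonneg (hμ : ∀ a (f : C_c(X, ℝ)), ⇑f ≤ φ a → ∫ x, f x ∂μ ≤ L a)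
    {a : A} (ha : 0 ≤ ⇑(φ a)) {χ : C_c(X, ℝ)} (hχ : ∀ x, χ x ∈ Icc (0 : ℝ) 1) :
    ∫ x, (φ a • χ) x ∂μ ≤ L a :=
  hμ a _ fun x => mul_le_of_le_one_right (ha x) (hχ x).2

-- `S ^ 2` instead of `S` spares a sign condition on `S`.
theorem sub_le_integral_smul_of_nonneg
    (hμ : ∀ a (f : C_c(X, ℝ)), ⇑f ≤ φ a → ∫ x, f x ∂μ ≤ L a) {a : A} (ha : 0 ≤ ⇑(φ a))
    {χ : C_c(X, ℝ)} (hχ : ∀ x, χ x ∈ Icc (0 : ℝ) 1) {S : A} {r : ℝ} (hr : 0 < r)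
    (hS : ∀ x, χ x ≠ 1 → r < φ S x) :
    L a - (r ^ 2)⁻¹ * L (S ^ 2 * a) ≤ ∫ x, (φ a • χ) x ∂μ := by
  have hle := hμ ((r ^ 2)⁻¹ • (S ^ 2 * a) - a) (-(φ a • χ)) fun x => by
    have hdecay : 1 - χ x ≤ (r ^ 2)⁻¹ * φ S x ^ 2 := by
      by_cases h1 : χ x = 1
      · rw [h1, sub_self]
        positivity
      · have hsq : 1 ≤ (r ^ 2)⁻¹ * φ S x ^ 2 := by
          rw [inv_mul_eq_div, one_le_div (by positivity)]
          exact pow_le_pow_left₀ hr.le (hS x h1).le 2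
        linarith [(hχ x).1]
    have hmul := mul_le_mul_of_nonneg_right hdecay (ha x)
    simp only [CompactlySupportedContinuousMap.neg_apply,
      CompactlySupportedContinuousMap.smulc_apply, smul_eq_mul, map_sub, map_smul, map_mul,
      map_pow, ContinuousMap.sub_apply, ContinuousMap.smul_apply, ContinuousMap.mul_apply,
      ContinuousMap.pow_apply]
    linarith
  rw [map_sub, map_smul, smul_eq_mul] at hle
  simp only [CompactlySupportedContinuousMap.neg_apply, integral_neg] at hle
  linarith

theorem integrable_of_integral_smul_le [T2Space X] [BorelSpace X] [IsFiniteMeasureOnCompacts μ]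
    {g : C(X, ℝ)} (hg : 0 ≤ ⇑g) {K : ℕ → Set X} (hK : ∀ n, IsCompact (K n))
    (hcover : ∀ x, ∀ᶠ n in atTop, x ∈ K n) {χ : ℕ → C_c(X, ℝ)} (hχK : ∀ n, EqOn (χ n) 1 (K n))
    (hχ : ∀ n x, 0 ≤ χ n x) {c : ℝ} (hc : ∀ n, ∫ x, (g • χ n) x ∂μ ≤ c) : Integrable g μ := by
  have hK_cover : AECover μ atTop K := ⟨.of_forall hcover, fun n => (hK n).measurableSet⟩
  refine hK_cover.integrable_of_integral_bounded_of_nonneg_ae c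
    (fun n => g.continuous.continuousOn.integrableOn_compact (hK n)) (.of_forall hg)
    (.of_forall fun n => ?_)
  rw [← setIntegral_congr_fun (hK n).measurableSet (eqOn_smul_of_eqOn_one (hχK n) g)]
  exact (setIntegral_le_integral
    ((g • χ n).continuous.integrable_of_hasCompactSupport (g • χ n).hasCompactSupport)
    (.of_forall fun x => mul_nonneg (hg x) (hχ n x))).trans (hc n)

theorem tendsto_integral_smul_of_eqOn_one [OpensMeasurableSpace X] {g : C(X, ℝ)}
    (hg : Integrable g μ) {K : ℕ → Set X} (hcover : ∀ x, ∀ᶠ n in atTop, x ∈ K n)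
    {χ : ℕ → C_c(X, ℝ)} (hχK : ∀ n, EqOn (χ n) 1 (K n)) (hχ : ∀ n x, χ n x ∈ Icc (0 : ℝ) 1) :
    Tendsto (fun n => ∫ x, (g • χ n) x ∂μ) atTop (𝓝 (∫ x, g x ∂μ)) := by
  refine tendsto_integral_of_dominated_convergence (fun x => ‖g x‖)
    (fun n => (g • χ n).continuous.aestronglyMeasurable) hg.norm (fun n => .of_forall fun x => ?_)
    (.of_forall fun x => ?_)
  · rw [CompactlySupportedContinuousMap.smulc_apply, norm_smul, Real.norm_of_nonneg (hχ n x).1]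
    exact mul_le_of_le_one_right (norm_nonneg _) (hχ n x).2
  · exact tendsto_const_nhds.congr' <| (hcover x).mono fun n hn =>
      (eqOn_smul_of_eqOn_one (hχK n) g hn).symm

theorem integrable_and_integral_eq_of_nonneg [T2Space X] [LocallyCompactSpace X] [BorelSpace X]
    [IsFiniteMeasureOnCompacts μ] (hμ : ∀ a (f : C_c(X, ℝ)), ⇑f ≤ φ a → ∫ x, f x ∂μ ≤ L a) {S : A}
    (hS : Tendsto (φ S) (cocompact X) atTop) {a : A} (ha : 0 ≤ ⇑(φ a)) :
    Integrable (φ a) μ ∧ ∫ x, φ a x ∂μ = L a := by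
  choose K hK hKS using fun n : ℕ => mem_cocompact.1 (hS.eventually_gt_atTop (n + 1 : ℝ))
  choose χ hχK hχ using fun n => exists_compactlySupported_eqOn_one (hK n)
  have hcover : ∀ x, ∀ᶠ n in atTop, x ∈ K n := fun x => by
    filter_upwards [eventually_ge_atTop ⌈φ S x⌉₊] with n hn
    by_contra hx
    have hlt : (n + 1 : ℝ) < φ S x := hKS n hx
    linarith [Nat.ceil_le.1 hn]
  have hupper : ∀ n, ∫ x, (φ a • χ n) x ∂μ ≤ L a := fun n =>
    integral_smul_le_of_nonneg hμ ha (hχ n)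
  have hlower : ∀ n : ℕ, L a - ((n + 1 : ℝ) ^ 2)⁻¹ * L (S ^ 2 * a) ≤ ∫ x, (φ a • χ n) x ∂μ :=
    fun n => sub_le_integral_smul_of_nonneg hμ ha (hχ n) (by positivity) fun x hx =>
      hKS n fun hxK => hx (hχK n hxK)
  have hint : Integrable (φ a) μ :=
    integrable_of_integral_smul_le ha hK hcover hχK (fun n x => (hχ n x).1) hupper
  have hlim : Tendsto (fun n => ∫ x, (φ a • χ n) x ∂μ) atTop (𝓝 (∫ x, φ a x ∂μ)) :=
    tendsto_integral_smul_of_eqOn_one hint hcover hχK hχ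
  have hzero : Tendsto (fun n : ℕ => ((n + 1 : ℝ) ^ 2)⁻¹) atTop (𝓝 0) := by
    simpa using (tendsto_one_div_add_atTop_nhds_zero_nat (𝕜 := ℝ)).pow 2
  have hL : Tendsto (fun n : ℕ => L a - ((n + 1 : ℝ) ^ 2)⁻¹ * L (S ^ 2 * a)) atTop
      (𝓝 (L a)) := by
    simpa using (hzero.mul_const (L (S ^ 2 * a))).const_sub (L a)
  exact ⟨hint, tendsto_nhds_unique hlim
    (tendsto_of_tendsto_of_tendsto_of_le_of_le hL tendsto_const_nhds hlower hupper)⟩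

theorem integrable_and_integral_eq [T2Space X] [LocallyCompactSpace X] [BorelSpace X]
    [IsFiniteMeasureOnCompacts μ]
    (hμ : ∀ a (f : C_c(X, ℝ)), ⇑f ≤ φ a → ∫ x, f x ∂μ ≤ L a) {S : A}
    (hS : Tendsto (φ S) (cocompact X) atTop) (a : A) :
    Integrable (φ a) μ ∧ ∫ x, φ a x ∂μ = L a := by
  have hsq : ∀ b, 0 ≤ ⇑(φ (b ^ 2)) := fun b x => by
    rw [map_pow]
    exact sq_nonneg (φ b x)
  obtain ⟨hplus, hplus'⟩ := integrable_and_integral_eq_of_nonneg hμ hS (hsq (a + 1))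
  obtain ⟨hminus, hminus'⟩ := integrable_and_integral_eq_of_nonneg hμ hS (hsq (a - 1))
  have hpol : a = (1 / 4 : ℝ) • ((a + 1) ^ 2 - (a - 1) ^ 2) := by
    rw [show (a + 1) ^ 2 - (a - 1) ^ 2 = (4 : ℕ) • a by rw [nsmul_eq_mul]; push_cast; ring,
      ← Nat.cast_smul_eq_nsmul ℝ, smul_smul]
    norm_num
  rw [hpol]
  simp only [map_smul, map_sub]
  refine ⟨(hplus.sub hminus).smul (1 / 4 : ℝ), ?_⟩
  rw [← hplus', ← hminus', ← integral_sub hplus hminus, smul_eq_mul, ← integral_const_mul]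
  rfl

theorem exists_measure_integral_eq_of_nonneg [T2Space X] [LocallyCompactSpace X] [BorelSpace X]
    (hL : ∀ a, 0 ≤ ⇑(φ a) → 0 ≤ L a) {S : A} (hS : Tendsto (φ S) (cocompact X) atTop) :
    ∃ μ : Measure X, ∀ a, Integrable (φ a) μ ∧ ∫ x, φ a x ∂μ = L a := by
  obtain ⟨μ, _, hμ⟩ := exists_measure_integral_le_of_le hL
  exact ⟨μ, integrable_and_integral_eq hμ hS⟩

end Representation

section LocalizationOfPolynomials

open MvPolynomial Filter Set

variable {σ : Type*} {𝔻 : Submonoid (MvPolynomial σ ℝ)}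

/-- The points at which none of the denominators in `𝔻` vanishes. -/
def nonvanishingLocus (𝔻 : Submonoid (MvPolynomial σ ℝ)) : Set (σ → ℝ) :=
  {x | ∀ q ∈ 𝔻, eval x q ≠ 0}

theorem exists_mem_forall_mem_nonvanishingLocus_iff (h𝔻 : 𝔻.FG) :
    ∃ Q ∈ 𝔻, ∀ x, x ∈ nonvanishingLocus 𝔻 ↔ eval x Q ≠ 0 := by
  obtain ⟨s, rfl⟩ := h𝔻
  have hQ : ∏ q ∈ s, q ∈ Submonoid.closure (s : Set (MvPolynomial σ ℝ)) :=
    Submonoid.prod_mem _ fun q hq => Submonoid.subset_closure hq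
  refine ⟨∏ q ∈ s, q, hQ, fun x => ⟨fun hx => hx _ hQ, fun hx q hq => ?_⟩⟩
  rw [eval_prod, Finset.prod_ne_zero_iff] at hx
  induction hq using Submonoid.closure_induction with
  | mem q hq => exact hx q hq
  | one => simp
  | mul p q _ _ hp hq => rw [map_mul]; exact mul_ne_zero hp hq

theorem isOpen_nonvanishingLocus (h𝔻 : 𝔻.FG) : IsOpen (nonvanishingLocus 𝔻) := by
  obtain ⟨Q, -, hQ⟩ := exists_mem_forall_mem_nonvanishingLocus_iff h𝔻
  rw [Set.ext hQ]
  exact isOpen_ne_fun (continuous_eval Q) continuous_const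

/-- Restriction of polynomials to the nonvanishing locus of `𝔻`. -/
noncomputable def evalOnLocus (𝔻 : Submonoid (MvPolynomial σ ℝ)) :
    MvPolynomial σ ℝ →ₐ[ℝ] C(nonvanishingLocus 𝔻, ℝ) where
  toFun p := ⟨fun x => eval x.1 p, (continuous_eval p).comp continuous_subtype_val⟩
  map_one' := by ext; simp
  map_mul' p q := by ext; simp
  map_zero' := by ext; simp
  map_add' p q := by ext; simp
  commutes' r := by ext; simp

theorem isUnit_evalOnLocus (q : 𝔻) : IsUnit (evalOnLocus 𝔻 q) :=
  (ContinuousMap.isUnit_iff_forall_ne_zero _).2 fun x => x.2 q q.2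

/-- Evaluation of the fractions `p / q` with `q ∈ 𝔻` on the nonvanishing locus of `𝔻`. -/
noncomputable def fractionEval (𝔻 : Submonoid (MvPolynomial σ ℝ)) :
    Localization 𝔻 →ₐ[ℝ] C(nonvanishingLocus 𝔻, ℝ) :=
  IsLocalization.liftAlgHom (M := 𝔻) (f := evalOnLocus 𝔻) isUnit_evalOnLocus

theorem fractionEval_mk (p : MvPolynomial σ ℝ) (q : 𝔻) (x : nonvanishingLocus 𝔻) :
    fractionEval 𝔻 (Localization.mk p q) x = eval x.1 p / eval x.1 q := by
  have hmul : fractionEval 𝔻 (Localization.mk p q) * evalOnLocus 𝔻 q = evalOnLocus 𝔻 p := by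
    rw [Localization.mk_eq_mk', mul_comm]
    exact ((IsLocalization.lift_mk'_spec (hg := isUnit_evalOnLocus) p _ q).1 rfl).symm
  exact eq_div_of_mul_eq (x.2 q q.2) (DFunLike.congr_fun hmul x)

theorem isCompact_sum_sq_le [Fintype σ] (r : ℝ) :
    IsCompact {x : σ → ℝ | ∑ i, x i ^ 2 ≤ r} := by
  have hbox : IsCompact (univ.pi fun _ : σ => Icc (-√r) √r) :=
    isCompact_univ_pi fun _ => isCompact_Icc
  have hclosed : IsClosed {x : σ → ℝ | ∑ i, x i ^ 2 ≤ r} :=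
    isClosed_le (by fun_prop) continuous_const
  refine hbox.of_isClosed_subset hclosed fun x hx i _ => abs_le.1 (Real.abs_le_sqrt ?_)
  exact (Finset.single_le_sum (fun j _ => sq_nonneg (x j)) (Finset.mem_univ i)).trans hx

theorem exists_tendsto_fractionEval_cocompact [Finite σ] (h𝔻 : 𝔻.FG) :
    ∃ S, Tendsto (fractionEval 𝔻 S) (cocompact (nonvanishingLocus 𝔻)) atTop := by
  cases nonempty_fintype σ
  obtain ⟨Q, hQ𝔻, hQ⟩ := exists_mem_forall_mem_nonvanishingLocus_iff h𝔻
  have hS : ∀ x : nonvanishingLocus 𝔻,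
      fractionEval 𝔻 (Localization.mk (∑ i, X i ^ 2) 1 + Localization.mk 1 ⟨Q, hQ𝔻⟩ ^ 2) x =
        ∑ i, x.1 i ^ 2 + (eval x.1 Q ^ 2)⁻¹ := fun x => by
    simp [fractionEval_mk]
  refine ⟨Localization.mk (∑ i, X i ^ 2) 1 + Localization.mk 1 ⟨Q, hQ𝔻⟩ ^ 2,
    tendsto_atTop.2 fun r => mem_cocompact.2 ⟨Subtype.val ⁻¹'
      ({x | ∑ i, x i ^ 2 ≤ r} ∩ {x | 1 ≤ r * eval x Q ^ 2}), ?_, fun x hx => ?_⟩⟩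
  · have hclosed : IsClosed {x | 1 ≤ r * eval x Q ^ 2} :=
      isClosed_le continuous_const (((continuous_eval Q).pow 2).const_mul r)
    refine Topology.IsInducing.subtypeVal.isCompact_preimage'
      ((isCompact_sum_sq_le r).inter_right hclosed) fun x hx => ?_
    refine Subtype.range_val ▸ (hQ x).2 fun hQx => ?_
    have hone : 1 ≤ r * eval x Q ^ 2 := hx.2
    norm_num [hQx] at hone
  · have hQx : 0 < eval x.1 Q ^ 2 := sq_pos_iff.2 ((hQ x).1 x.2)
    have hsum : 0 ≤ ∑ i, x.1 i ^ 2 := Finset.sum_nonneg fun i _ => sq_nonneg _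
    rw [mem_ofPred_eq, hS]
    by_cases hr : ∑ i, x.1 i ^ 2 ≤ r
    · have hlt : r * eval x.1 Q ^ 2 < 1 := not_le.1 fun h => hx ⟨hr, h⟩
      have hinv : r < (eval x.1 Q ^ 2)⁻¹ := by rwa [← one_div, lt_div_iff₀ hQx]
      linarith
    · linarith [inv_pos.2 hQx]

theorem exists_countable_span_eq_top (R A : Type*) [CommSemiring R] [CommSemiring A] [Algebra R A]
    [Algebra.FiniteType R A] : ∃ s : Set A, s.Countable ∧ Submodule.span R s = ⊤ := by
  obtain ⟨n, f, hf⟩ := Algebra.FiniteType.iff_quotient_mvPolynomial''.1 ‹Algebra.FiniteType R A›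
  refine ⟨f.toLinearMap '' range (basisMonomials (Fin n) R), (countable_range _).image _, ?_⟩
  rw [Submodule.span_image, Module.Basis.span_eq, Submodule.map_top, LinearMap.range_eq_top]
  exact hf

theorem apply_nonneg_of_fractionEval_nonneg [Finite σ] (h𝔻 : 𝔻.FG) {i₀ : σ}
    (hdenom : ∀ j ≠ i₀, 1 + X j ^ 2 ∈ 𝔻) {L : Module.Dual ℝ (Localization 𝔻)}
    (hL : L ∈ squarePositiveCone (Localization 𝔻)) {a : Localization 𝔻}
    (ha : 0 ≤ ⇑(fractionEval 𝔻 a)) : 0 ≤ L a := by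
  have : Monoid.FG 𝔻 := (Monoid.fg_iff_submonoid_fg 𝔻).2 h𝔻
  obtain ⟨s, hs, hspan⟩ := exists_countable_span_eq_top ℝ (Localization 𝔻)
  have : Countable s := hs
  obtain ⟨Q, hQ𝔻, hQ⟩ := exists_mem_forall_mem_nonvanishingLocus_iff h𝔻
  induction a using Localization.induction_on with | _ y =>
  obtain ⟨p, q⟩ := y
  let ψ : MvPolynomial σ ℝ →ₐ[ℝ] Localization 𝔻 := IsScalarTower.toAlgHom ℝ _ _
  have hunit : ∀ j ≠ i₀, IsUnit (1 + ψ (X j) ^ 2) := fun j hj => by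
    simpa [ψ] using IsLocalization.map_units (Localization 𝔻) ⟨_, hdenom j hj⟩
  have hnum : ∀ x, 0 ≤ eval x (p * q.1 * Q ^ 2) := fun x => by
    by_cases hx : x ∈ nonvanishingLocus 𝔻
    · have hq : eval x q.1 ≠ 0 := hx q q.2
      have hfrac : 0 ≤ eval x p / eval x q.1 := fractionEval_mk p q ⟨x, hx⟩ ▸ ha ⟨x, hx⟩
      have hpq : eval x p * eval x q.1 = eval x p / eval x q.1 * eval x q.1 ^ 2 := by field_simp
      rw [map_mul, map_mul, map_pow, hpq]
      positivity
    · have hQx : eval x Q = 0 := not_not.1 (mt (hQ x).2 hx)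
      simp [hQx]
  let w : Localization 𝔻 := Localization.mk 1 (q * ⟨Q, hQ𝔻⟩)
  have hw : Localization.mk p q = w * w * ψ (p * q.1 * Q ^ 2) := by
    simp only [w, ψ, IsScalarTower.coe_toAlgHom', ← Localization.mk_one_eq_algebraMap,
      Localization.mk_mul, Localization.mk_eq_mk_iff, Localization.r_iff_exists]
    exact ⟨1, by push_cast; ring⟩
  rw [hw]
  exact apply_nonneg_of_isUnit_one_add_sq (a := ((↑) : s → Localization 𝔻))
    (by rwa [Subtype.range_val]) hunit
    (comp_mulLeft_mem_squarePositiveCone hL (.mul_self w)) hnum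

end LocalizationOfPolynomials

theorem rational_mp_denominators_all_but_last_coordinate_general {σ : Type*} [Finite σ] (i₀ : σ)
    (𝔻 : Submonoid (MvPolynomial σ ℝ)) (h𝔻fg : 𝔻.FG)
    (hq : ∀ j ≠ i₀, (1 + MvPolynomial.X j ^ 2 : MvPolynomial σ ℝ) ∈ 𝔻)
    (L : Localization 𝔻 →ₗ[ℝ] ℝ) (hL : ∀ a : Localization 𝔻, 0 ≤ L (a ^ 2)) :
    ∃ μ : MeasureTheory.Measure (σ → ℝ),
      (∀ q ∈ 𝔻, μ {x : σ → ℝ | MvPolynomial.eval x q = 0} = 0) ∧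
      ∀ (p : MvPolynomial σ ℝ) (q : MvPolynomial σ ℝ) (hq' : q ∈ 𝔻),
        MeasureTheory.Integrable
          (fun x : σ → ℝ => MvPolynomial.eval x p / MvPolynomial.eval x q) μ ∧
        L (Localization.mk p ⟨q, hq'⟩) =
          ∫ x : σ → ℝ, MvPolynomial.eval x p / MvPolynomial.eval x q ∂μ := by
  have hopen : IsOpen (nonvanishingLocus 𝔻) := isOpen_nonvanishingLocus h𝔻fg
  have : LocallyCompactSpace (nonvanishingLocus 𝔻) := hopen.locallyCompactSpace
  obtain ⟨S, hS⟩ := exists_tendsto_fractionEval_cocompact h𝔻fg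
  obtain ⟨ν, hν⟩ := exists_measure_integral_eq_of_nonneg
    (fun a => apply_nonneg_of_fractionEval_nonneg h𝔻fg hq (mem_squarePositiveCone.2 hL)) hS
  have hval : MeasurableEmbedding ((↑) : nonvanishingLocus 𝔻 → σ → ℝ) :=
    .subtype_coe hopen.measurableSet
  refine ⟨ν.map (↑), fun q hq𝔻 => ?_, fun p q hq𝔻 => ?_⟩
  · have hdisj : ((↑) : nonvanishingLocus 𝔻 → σ → ℝ) ⁻¹' {x | MvPolynomial.eval x q = 0} = ∅ :=
      Set.eq_empty_of_forall_notMem fun x => x.2 q hq𝔻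
    rw [hval.map_apply, hdisj, MeasureTheory.measure_empty]
  · have hmk : ⇑(fractionEval 𝔻 (Localization.mk p ⟨q, hq𝔻⟩)) =
        (fun x => MvPolynomial.eval x p / MvPolynomial.eval x q) ∘ (↑) :=
      funext (fractionEval_mk p ⟨q, hq𝔻⟩)
    obtain ⟨hint, heq⟩ := hν (Localization.mk p ⟨q, hq𝔻⟩)
    rw [hmk] at hint heq
    rw [hval.integrable_map_iff, hval.integral_map]
    exact ⟨hint, heq.symm⟩

/-- **Example 3.10.**  Let `d ≥ 1` and let `𝔻` be a finitely generated
multiplicative set in `ℝ[x₁,…,x_d]` (with `1 ∈ 𝔻`, `0 ∉ 𝔻`) containing the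
polynomials `1 + x_j²` for `j = 1,…,d−1` (all coordinates except the last).
Then every linear functional on `A = 𝔻⁻¹ℝ[x₁,…,x_d]` that is nonnegative on
squares is given by a positive Borel measure on `ℝ^d` vanishing on the zero
set of each `q ∈ 𝔻`. -/
theorem rational_mp_denominators_all_but_last_coordinate {d : ℕ} (hd : 1 ≤ d)
    (𝔻 : Submonoid (MvPolynomial (Fin d) ℝ)) (h𝔻0 : (0 : MvPolynomial (Fin d) ℝ) ∉ 𝔻)
    (h𝔻fg : 𝔻.FG)
    (hq : ∀ j : Fin d, (j : ℕ) < d - 1 →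
      (1 + MvPolynomial.X j ^ 2 : MvPolynomial (Fin d) ℝ) ∈ 𝔻)
    (L : Localization 𝔻 →ₗ[ℝ] ℝ) (hL : ∀ a : Localization 𝔻, 0 ≤ L (a ^ 2)) :
    ∃ μ : MeasureTheory.Measure (Fin d → ℝ),
      (∀ q ∈ 𝔻, μ {x : Fin d → ℝ | MvPolynomial.eval x q = 0} = 0) ∧
      ∀ (p : MvPolynomial (Fin d) ℝ) (q : MvPolynomial (Fin d) ℝ) (hq' : q ∈ 𝔻),
        MeasureTheory.Integrable
          (fun x : Fin d → ℝ => MvPolynomial.eval x p / MvPolynomial.eval x q) μ ∧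
        L (Localization.mk p ⟨q, hq'⟩) =
          ∫ x : Fin d → ℝ, MvPolynomial.eval x p / MvPolynomial.eval x q ∂μ :=
  rational_mp_denominators_all_but_last_coordinate_general ⟨d - 1, Nat.sub_one_lt_of_lt hd⟩ 𝔻 h𝔻fg
    (fun j hj => hq j <| (Nat.le_sub_one_of_lt j.2).lt_of_ne (Fin.val_ne_of_ne hj)) L hL
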